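/- For every t ∈ (0,T) and every bounded Borel measurable function f : ℝ^ν → ℝ one has E[f(b_t)] = ∫_{ℝ^ν} (p_t(x,z) p_{T−t}(z,y) / p_T(x,y)) f(z) dz; in particular, the law of b_t is absolutely continuous with respect to Lebesgue measure with density z ↦ p_t(x,z) p_{T−t}(z,y)/p_T(x,y). -/

import Mathlib

open MeasureTheory ProbabilityTheory

/-- A `ν`-dimensional Brownian motion `B` on a filtered probability space
`(Ω, m, (ℱ_t), P)` satisfying the usual conditions: the filtration is complete and
right-continuous, `B` has continuous paths on `[0,∞)` with `B_0 = 0`, `B` is adapted, and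
for `0 ≤ s ≤ t` the increment `B_t − B_s` is independent of `ℱ_s` and is a centered
Gaussian vector with covariance matrix `(t−s)·Id` (componentwise iid `N(0, t−s)`). -/
structure IsBrownianMotion {Ω : Type*} [m : MeasurableSpace Ω] (P : Measure Ω) (ν : ℕ)
    (F : Filtration ℝ m) (B : ℝ → Ω → Fin ν → ℝ) : Prop where
  complete : ∀ (t : ℝ) (A : Set Ω), P A = 0 → MeasurableSet[F t] A
  rightCont : ∀ t : ℝ, (F t : MeasurableSpace Ω) = ⨅ s ∈ Set.Ioi t, (F s : MeasurableSpace Ω)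
  contPaths : ∀ ω : Ω, ContinuousOn (fun t => B t ω) (Set.Ici 0)
  start : ∀ ω : Ω, B 0 ω = 0
  adapted : ∀ t : ℝ, Measurable[F t] (B t)
  indepIncr : ∀ s t : ℝ, 0 ≤ s → s ≤ t →
    Indep (MeasurableSpace.comap (fun ω => B t ω - B s ω) inferInstance) (F s) P
  gaussIncr : ∀ s t : ℝ, 0 ≤ s → s ≤ t →
    Measure.map (fun ω => B t ω - B s ω) P =
      Measure.pi fun _ : Fin ν => gaussianReal 0 (Real.toNNReal (t - s))

/-- The Brownian bridge from `q` to `y` in time `T` driven by the path `B`: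
`b_t = (t/T)y + ((T−t)/T)q + B_t − (T−t)∫₀ᵗ (T−s)⁻² B_s ds` for `t < T`, and `b_t = y`
otherwise (in particular `b_T = y`). -/
noncomputable def bridgeBB (ν : ℕ) (T : ℝ) (q y : Fin ν → ℝ) (B : ℝ → Fin ν → ℝ)
    (t : ℝ) : Fin ν → ℝ :=
  if t < T then
    (t / T) • y + ((T - t) / T) • q + B t -
      (T - t) • ∫ s in (0 : ℝ)..t, ((T - s) ^ 2)⁻¹ • B s
  else y

/-- The `ν`-dimensional Gaussian heat kernel `p_t(u,z) = (2πt)^{−ν/2} e^{−|u−z|²/(2t)}`. -/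
noncomputable def heatKernel (ν : ℕ) (t : ℝ) (u z : Fin ν → ℝ) : ℝ :=
  (2 * Real.pi * t) ^ (-(ν : ℝ) / 2) * Real.exp (-(∑ i, (u i - z i) ^ 2) / (2 * t))

open Filter Topology
open scoped MeasureTheory

/-- centered isotropic Gaussian measure -/
noncomputable def gam (ν : ℕ) (v : ℝ) : Measure (Fin ν → ℝ) :=
  Measure.pi fun _ : Fin ν => gaussianReal 0 (Real.toNNReal v)

instance (ν : ℕ) (v : ℝ) : IsProbabilityMeasure (gam ν v) := by
  unfold gam; infer_instance

lemma gam_conv (ν : ℕ) {a b : ℝ} (ha : 0 ≤ a) (hb : 0 ≤ b) :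
    (gam ν a) ∗ (gam ν b) = gam ν (a + b) := by
  refine Measure.ext_of_charFunDual (funext fun L => ?_)
  rw [charFunDual_conv]
  simp only [gam, charFunDual_pi, ← Finset.prod_mul_distrib]
  refine Finset.prod_congr rfl fun i _ => ?_
  rw [← charFunDual_conv, gaussianReal_conv_gaussianReal, add_zero, Real.toNNReal_add ha hb]

lemma gam_smul (ν : ℕ) (c v : ℝ) :
    (gam ν v).map (fun z => c • z) = gam ν (c ^ 2 * v) := by
  unfold gam
  have h1 : (gaussianReal 0 (Real.toNNReal v)).map (fun x => c * x) =
      gaussianReal 0 (Real.toNNReal (c ^ 2 * v)) := by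
    rw [gaussianReal_map_const_mul, mul_zero, Real.toNNReal_mul (sq_nonneg c)]
    congr 2
    ext
    simp [sq_nonneg]
  have := Measure.pi_map_pi (μ := fun _ : Fin ν => gaussianReal 0 (Real.toNNReal v))
    (f := fun _ x => c * x) (hμ := fun i => by rw [h1]; infer_instance) (fun i => by fun_prop)
  simp only [h1] at this
  rw [← this]
  rfl

lemma gam_zero (ν : ℕ) : gam ν 0 = Measure.dirac 0 := by
  have := gam_smul ν 0 0
  simp only [zero_smul] at this
  rw [Measure.map_const] at this
  simpa using this.symm

lemma law_sum {Ω : Type*} [m : MeasurableSpace Ω] (P : Measure Ω)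
    [IsProbabilityMeasure P] (ν : ℕ) (F : Filtration ℝ m)
    (B : ℝ → Ω → Fin ν → ℝ) (hB : IsBrownianMotion P ν F B) (s c : ℕ → ℝ) (hs : Monotone s)
    (h0 : 0 ≤ s 0) (n : ℕ) :
    Measurable[F (s n)]
      (fun ω => ∑ k ∈ Finset.range n, c k • (B (s (k + 1)) ω - B (s k) ω)) ∧
    P.map (fun ω => ∑ k ∈ Finset.range n, c k • (B (s (k + 1)) ω - B (s k) ω)) =
      gam ν (∑ k ∈ Finset.range n, c k ^ 2 * (s (k + 1) - s k)) := by
  have hle : ∀ t, (F t : MeasurableSpace Ω) ≤ m := F.le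
  induction n with
  | zero =>
    refine ⟨by simpa using measurable_const, ?_⟩
    simp [gam_zero, Measure.map_const]
  | succ n ih =>
    obtain ⟨hm, hlaw⟩ := ih
    have hsn : s n ≤ s (n + 1) := hs (Nat.le_succ n)
    have hs0 : 0 ≤ s n := h0.trans (hs (Nat.zero_le n))
    have hinc : Measurable[F (s (n + 1))] (fun ω => B (s (n + 1)) ω - B (s n) ω) :=
      (hB.adapted _).sub ((hB.adapted _).mono (F.mono hsn) le_rfl)
    have hinc' : Measurable (fun ω => B (s (n + 1)) ω - B (s n) ω) := hinc.mono (hle _) le_rfl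
    have hm' := hm.mono (hle _) le_rfl
    constructor
    · simp only [Finset.sum_range_succ]
      exact (hm.mono (F.mono hsn) le_rfl).add (hinc.const_smul (c n))
    · simp only [Finset.sum_range_succ]
      have hind : IndepFun
          (fun ω => ∑ k ∈ Finset.range n, c k • (B (s (k + 1)) ω - B (s k) ω))
          (fun ω => c n • (B (s (n + 1)) ω - B (s n) ω)) P := by
        have h1 : IndepFun (fun ω => B (s (n + 1)) ω - B (s n) ω)
            (fun ω => ∑ k ∈ Finset.range n, c k • (B (s (k + 1)) ω - B (s k) ω)) P := by
          rw [IndepFun_iff_Indep]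
          exact indep_of_indep_of_le_right (hB.indepIncr _ _ hs0 hsn) hm.comap_le
        exact (h1.comp (φ := fun z => c n • z) (ψ := id)
          (measurable_const_smul (c n)) measurable_id).symm
      have := hind.map_add_eq_map_conv_map₀ hm'.aemeasurable
        (g := fun ω => c n • (B (s (n + 1)) ω - B (s n) ω))
        (hinc'.const_smul (c n)).aemeasurable
      have h2 : P.map (fun ω => c n • (B (s (n + 1)) ω - B (s n) ω)) =
          gam ν (c n ^ 2 * (s (n + 1) - s n)) := by
        rw [← gam_smul, gam, ← hB.gaussIncr _ _ hs0 hsn,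
          Measure.map_map (measurable_const_smul (c n)) hinc']
        rfl
      rw [hlaw, h2, gam_conv] at this
      · exact this
      · exact Finset.sum_nonneg fun k _ =>
          mul_nonneg (sq_nonneg _) (sub_nonneg.2 (hs (Nat.le_succ k)))
      · exact mul_nonneg (sq_nonneg _) (sub_nonneg.2 hsn)

/-- uniform partition points -/
noncomputable def pt (t : ℝ) (n k : ℕ) : ℝ := (k : ℝ) * t / n

lemma pt_mono {t : ℝ} (ht : 0 ≤ t) (n : ℕ) : Monotone (pt t n) := by
  intro a b hab
  unfold pt
  gcongr

lemma pt_zero (t : ℝ) (n : ℕ) : pt t n 0 = 0 := by simp [pt]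

lemma pt_self (t : ℝ) {n : ℕ} (hn : n ≠ 0) : pt t n n = t := by
  unfold pt; field_simp

lemma pt_succ_sub (t : ℝ) (n k : ℕ) : pt t n (k + 1) - pt t n k = t / n := by
  unfold pt; push_cast; ring

lemma riemann {E : Type*} [NormedAddCommGroup E] [NormedSpace ℝ E] [CompleteSpace E]
    (h : ℝ → E) (g g' : ℝ → ℝ) {t : ℝ} (ht : 0 < t) (hh : ContinuousOn h (Set.Icc 0 t))
    (hg : ∀ s ∈ Set.Icc 0 t, HasDerivAt g (g' s) s) (hg' : ContinuousOn g' (Set.Icc 0 t))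
    (τ : ℕ → ℕ → ℝ) (hτ : ∀ n k, τ n k ∈ Set.Icc (pt t n k) (pt t n (k + 1))) :
    Tendsto (fun n => ∑ k ∈ Finset.range n, (g (pt t n (k + 1)) - g (pt t n k)) • h (τ n k))
      atTop (𝓝 (∫ s in (0 : ℝ)..t, g' s • h s)) := by
  obtain ⟨C, hC⟩ := isCompact_Icc.exists_bound_of_continuousOn hg'
  have hC0 : 0 ≤ C := (norm_nonneg _).trans (hC 0 ⟨le_rfl, ht.le⟩)
  have huc := isCompact_Icc.uniformContinuousOn_of_continuous hh
  rw [Metric.uniformContinuousOn_iff] at huc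
  rw [Metric.tendsto_atTop]
  intro ε hε
  have hCt : 0 < (C + 1) * t := by positivity
  obtain ⟨δ, hδ, huc⟩ := huc (ε / ((C + 1) * t) / 2) (by positivity)
  obtain ⟨N, hN⟩ := exists_nat_gt (t / δ)
  refine ⟨N + 1, fun n hn => ?_⟩
  have hn0 : n ≠ 0 := by omega
  have hnpos : (0 : ℝ) < n := by positivity
  have hmesh : t / n < δ := by
    rw [div_lt_iff₀ hnpos, mul_comm, ← div_lt_iff₀ hδ]
    exact hN.trans (by exact_mod_cast hn)
  have hsub : ∀ k < n, Set.Icc (pt t n k) (pt t n (k + 1)) ⊆ Set.Icc 0 t := by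
    intro k hk
    apply Set.Icc_subset_Icc
    · rw [← pt_zero t n]; exact pt_mono ht.le n (Nat.zero_le k)
    · conv_rhs => rw [← pt_self t hn0]
      exact pt_mono ht.le n hk
  have hpk : ∀ k, pt t n k ≤ pt t n (k + 1) := fun k => pt_mono ht.le n (Nat.le_succ k)
  have hcont : ContinuousOn (fun s => g' s • h s) (Set.Icc 0 t) := hg'.smul hh
  have hint : ∀ k < n, IntervalIntegrable (fun s => g' s • h s) volume (pt t n k) (pt t n (k + 1)) := by
    intro k hk
    apply ContinuousOn.intervalIntegrable
    rw [Set.uIcc_of_le (hpk k)]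
    exact hcont.mono (hsub k hk)
  have hint' : ∀ k < n, IntervalIntegrable g' volume (pt t n k) (pt t n (k + 1)) := by
    intro k hk
    apply ContinuousOn.intervalIntegrable
    rw [Set.uIcc_of_le (hpk k)]
    exact hg'.mono (hsub k hk)
  have hsum := intervalIntegral.sum_integral_adjacent_intervals hint
  rw [pt_zero, pt_self t hn0] at hsum
  rw [dist_eq_norm, ← hsum, ← Finset.sum_sub_distrib]
  have hterm : ∀ k ∈ Finset.range n, ‖(g (pt t n (k + 1)) - g (pt t n k)) • h (τ n k) -
      ∫ s in (pt t n k)..(pt t n (k + 1)), g' s • h s‖ ≤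
        (C * (ε / ((C + 1) * t) / 2)) * (t / n) := by
    intro k hk
    rw [Finset.mem_range] at hk
    have h1 : g (pt t n (k + 1)) - g (pt t n k) = ∫ s in (pt t n k)..(pt t n (k + 1)), g' s := by
      rw [intervalIntegral.integral_eq_sub_of_hasDerivAt _ (hint' k hk)]
      intro s hs
      rw [Set.uIcc_of_le (hpk k)] at hs
      exact hg s (hsub k hk hs)
    rw [h1, ← intervalIntegral.integral_smul_const, ← intervalIntegral.integral_sub _ (hint k hk)]
    · have h2 : ∀ s ∈ Set.uIoc (pt t n k) (pt t n (k + 1)),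
          ‖g' s • h (τ n k) - g' s • h s‖ ≤ C * (ε / ((C + 1) * t) / 2) := by
        intro s hs
        rw [Set.uIoc_of_le (hpk k)] at hs
        have hs' : s ∈ Set.Icc (pt t n k) (pt t n (k + 1)) := ⟨hs.1.le, hs.2⟩
        rw [← smul_sub, norm_smul]
        refine mul_le_mul (hC s (hsub k hk hs')) ?_ (norm_nonneg _) hC0
        rw [← dist_eq_norm]
        refine (huc _ (hsub k hk (hτ n k)) _ (hsub k hk hs') ?_).le
        refine lt_of_le_of_lt (Real.dist_le_of_mem_Icc (hτ n k) hs') ?_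
        rwa [pt_succ_sub]
      refine (intervalIntegral.norm_integral_le_of_norm_le_const h2).trans ?_
      rw [pt_succ_sub, abs_of_nonneg (by positivity)]
    · exact ⟨(hint' k hk).1.smul_const _, (hint' k hk).2.smul_const _⟩
  refine lt_of_le_of_lt (norm_sum_le_of_le _ hterm) ?_
  rw [Finset.sum_const, Finset.card_range, nsmul_eq_mul]
  have : (n : ℝ) * (C * (ε / ((C + 1) * t) / 2) * (t / n)) = (C / (C + 1)) * (ε / 2) := by
    field_simp
  rw [this]
  have : C / (C + 1) ≤ 1 := by rw [div_le_one (by positivity)]; linarith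
  nlinarith

lemma law_X {Ω : Type*} [m : MeasurableSpace Ω] (P : Measure Ω)
    [IsProbabilityMeasure P] (ν : ℕ) (F : Filtration ℝ m)
    (B : ℝ → Ω → Fin ν → ℝ) (hB : IsBrownianMotion P ν F B) (T : ℝ) (hT : 0 < T)
    (t : ℝ) (ht : t ∈ Set.Ioo 0 T) :
    Measurable (fun ω => B t ω - (T - t) • ∫ s in (0 : ℝ)..t, ((T - s) ^ 2)⁻¹ • B s ω) ∧
    P.map (fun ω => B t ω - (T - t) • ∫ s in (0 : ℝ)..t, ((T - s) ^ 2)⁻¹ • B s ω) =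
      gam ν (t * (T - t) / T) := by
  obtain ⟨ht0, htT⟩ := ht
  have hne : ∀ s ∈ Set.Icc 0 t, T - s ≠ 0 := fun s hs => by linarith [hs.2]
  have hgd : ∀ s ∈ Set.Icc 0 t, HasDerivAt (fun s => (T - s)⁻¹) (((T - s) ^ 2)⁻¹) s := by
    intro s hs
    have := ((hasDerivAt_id s).const_sub T).inv (hne s hs)
    have h2 : -(-1) / (T - s) ^ 2 = ((T - s) ^ 2)⁻¹ := by rw [neg_neg, one_div]
    rw [← h2]
    exact this
  have hgc : ContinuousOn (fun s => ((T - s) ^ 2)⁻¹) (Set.Icc 0 t) := by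
    refine ContinuousOn.inv₀ (by fun_prop) ?_
    intro s hs
    exact pow_ne_zero 2 (hne s hs)
  set X := fun ω => B t ω - (T - t) • ∫ s in (0 : ℝ)..t, ((T - s) ^ 2)⁻¹ • B s ω with hX
  let c : ℕ → ℕ → ℝ := fun n k => (T - t) * (T - pt t n (k + 1))⁻¹
  let Y : ℕ → Ω → Fin ν → ℝ := fun n ω =>
    ∑ k ∈ Finset.range n, c n k • (B (pt t n (k + 1)) ω - B (pt t n k) ω)
  let v : ℕ → ℝ := fun n => ∑ k ∈ Finset.range n, c n k ^ 2 * (pt t n (k + 1) - pt t n k)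
  have hlaw := fun n => law_sum P ν F B hB (pt t n) (c n) (pt_mono ht0.le n)
    (by rw [pt_zero]) n
  have hYm : ∀ n, Measurable (Y n) := fun n => (hlaw n).1.mono (F.le _) le_rfl
  have hYl : ∀ n, P.map (Y n) = gam ν (v n) := fun n => (hlaw n).2
  have hYX : ∀ ω, Tendsto (fun n => Y n ω) atTop (𝓝 (X ω)) := by
    intro ω
    have hr := riemann (fun s => B s ω) _ _ ht0
      ((hB.contPaths ω).mono Set.Icc_subset_Ici_self) hgd hgc (fun n k => pt t n k)
      (fun n k => ⟨le_rfl, pt_mono ht0.le n (Nat.le_succ k)⟩)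
    have hr2 := (hr.const_smul (T - t)).const_sub (B t ω)
    refine hr2.congr' ?_
    filter_upwards [eventually_ne_atTop 0] with n hn
    have htel := Finset.sum_range_sub
      (fun k => ((T - t) * (T - pt t n k)⁻¹) • B (pt t n k) ω) n
    rw [pt_zero, pt_self t hn, hB.start, smul_zero, sub_zero,
      mul_inv_cancel₀ (by linarith : T - t ≠ 0), one_smul] at htel
    rw [← htel, Finset.smul_sum, ← Finset.sum_sub_distrib]
    refine Finset.sum_congr rfl fun k _ => ?_
    simp only [c]
    module
  have hv0 : ∀ n, 0 ≤ v n := fun n => Finset.sum_nonneg fun k _ =>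
          mul_nonneg (sq_nonneg _) (sub_nonneg.2 (pt_mono ht0.le n (Nat.le_succ k)))
  have hv : Tendsto v atTop (𝓝 (t * (T - t) / T)) := by
    have hr := riemann (fun s => ((T - s) ^ 2)⁻¹) id (fun _ => 1) ht0 hgc
      (fun s _ => hasDerivAt_id s) continuousOn_const (fun n k => pt t n (k + 1))
      (fun n k => ⟨pt_mono ht0.le n (Nat.le_succ k), le_rfl⟩)
    have hI : ∫ s in (0 : ℝ)..t, (1 : ℝ) • ((T - s) ^ 2)⁻¹ = (T - t)⁻¹ - T⁻¹ := by
      simp only [one_smul]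
      rw [intervalIntegral.integral_eq_sub_of_hasDerivAt (f := fun s => (T - s)⁻¹)]
      · simp
      · rwa [Set.uIcc_of_le ht0.le]
      · apply ContinuousOn.intervalIntegrable
        rwa [Set.uIcc_of_le ht0.le]
    rw [hI] at hr
    have hr2 := hr.const_mul ((T - t) ^ 2)
    have h3 : (T - t) ^ 2 * ((T - t)⁻¹ - T⁻¹) = t * (T - t) / T := by
      have : T - t ≠ 0 := by linarith
      field_simp
      ring
    rw [h3] at hr2
    refine hr2.congr fun n => ?_
    rw [Finset.mul_sum]
    refine Finset.sum_congr rfl fun k _ => ?_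
    simp only [c, id, smul_eq_mul]
    rw [mul_pow, inv_pow]
    ring
  have hXm : Measurable X := measurable_of_tendsto_metrizable hYm (tendsto_pi_nhds.2 hYX)
  refine ⟨hXm, ?_⟩
  have hgs : ∀ a : ℝ, 0 ≤ a → gam ν a = (gam ν 1).map (fun z => √a • z) := by
    intro a ha
    rw [gam_smul, Real.sq_sqrt ha, mul_one]
  have hvv : 0 ≤ t * (T - t) / T := by
    have : 0 ≤ T - t := by linarith
    positivity
  haveI : IsProbabilityMeasure (P.map X) := Measure.isProbabilityMeasure_map hXm.aemeasurable
  refine ext_of_forall_integral_eq_of_IsFiniteMeasure fun f => ?_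
  have hlim1 : Tendsto (fun n => ∫ ω, f (Y n ω) ∂P) atTop (𝓝 (∫ ω, f (X ω) ∂P)) := by
    refine tendsto_integral_of_dominated_convergence (fun _ => ‖f‖)
      (fun n => (f.continuous.measurable.comp (hYm n)).aestronglyMeasurable)
      (integrable_const _) (fun n => ae_of_all _ fun ω => f.norm_coe_le_norm _)
      (ae_of_all _ fun ω => (f.continuous.tendsto _).comp (hYX ω))
  have hlim2 : Tendsto (fun n => ∫ z, f (√(v n) • z) ∂(gam ν 1)) atTop
      (𝓝 (∫ z, f (√(t * (T - t) / T) • z) ∂(gam ν 1))) := by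
    refine tendsto_integral_of_dominated_convergence (fun _ => ‖f‖)
      (fun n => (f.continuous.comp (continuous_const_smul _)).measurable.aestronglyMeasurable)
      (integrable_const _) (fun n => ae_of_all _ fun ω => f.norm_coe_le_norm _)
      (ae_of_all _ fun z => (f.continuous.tendsto _).comp
        (((Real.continuous_sqrt.tendsto _).comp hv).smul_const z))
  have heq : ∀ n, ∫ ω, f (Y n ω) ∂P = ∫ z, f (√(v n) • z) ∂(gam ν 1) := by
    intro n
    rw [← integral_map (φ := Y n) (f := f) (hYm n).aemeasurable
      f.continuous.measurable.aestronglyMeasurable, hYl, hgs _ (hv0 n),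
      integral_map (measurable_const_smul _).aemeasurable
      f.continuous.measurable.aestronglyMeasurable]
  rw [integral_map hXm.aemeasurable f.continuous.measurable.aestronglyMeasurable,
    hgs _ hvv, integral_map (measurable_const_smul _).aemeasurable
      f.continuous.measurable.aestronglyMeasurable]
  exact tendsto_nhds_unique hlim1 (by simpa only [heq] using hlim2)

lemma gam_add (ν : ℕ) {v : ℝ} (q : Fin ν → ℝ) :
    (gam ν v).map (fun z => q + z) =
      Measure.pi fun i => gaussianReal (q i) (Real.toNNReal v) := by
  have h1 : ∀ i : Fin ν, (gaussianReal 0 (Real.toNNReal v)).map (fun x => q i + x) =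
      gaussianReal (q i) (Real.toNNReal v) := by
    intro i
    rw [gaussianReal_map_const_add, zero_add]
  have := Measure.pi_map_pi (μ := fun _ : Fin ν => gaussianReal 0 (Real.toNNReal v))
    (f := fun i x => q i + x) (hμ := fun i => by rw [h1]; infer_instance) (fun i => by fun_prop)
  simp only [h1] at this
  exact this

lemma pi_density (ν : ℕ) {v : ℝ} (hv : 0 < v) (q : Fin ν → ℝ) :
    (Measure.pi fun i => gaussianReal (q i) (Real.toNNReal v)) =
      (volume : Measure (Fin ν → ℝ)).withDensity fun z =>
        ENNReal.ofReal (∏ i, gaussianPDFReal (q i) (Real.toNNReal v) (z i)) := by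
  have hv' : Real.toNNReal v ≠ 0 := by simpa using hv
  refine Measure.pi_eq fun s hs => ?_
  rw [withDensity_apply _ (MeasurableSet.univ_pi hs), volume_pi, Measure.restrict_pi_pi,
    ← ofReal_integral_eq_lintegral_ofReal, integral_fintype_prod_eq_prod,
    ENNReal.ofReal_prod_of_nonneg]
  · refine Finset.prod_congr rfl fun i _ => ?_
    rw [gaussianReal_apply_eq_integral _ hv']
  · exact fun i _ => integral_nonneg fun z => gaussianPDFReal_nonneg _ _ _
  · exact Integrable.fintype_prod_dep
      (f := fun i z => gaussianPDFReal (q i) (Real.toNNReal v) z)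
      fun i => (integrable_gaussianPDFReal _ _).restrict
  · exact ae_of_all _ fun z => Finset.prod_nonneg fun i _ => gaussianPDFReal_nonneg _ _ _

lemma kernel_eq (ν : ℕ) {T t : ℝ} (ht0 : 0 < t) (htT : t < T) (x y z : Fin ν → ℝ) :
    ∏ i, gaussianPDFReal (((t / T) • y + ((T - t) / T) • x) i)
        (Real.toNNReal (t * (T - t) / T)) (z i) =
      heatKernel ν t x z * heatKernel ν (T - t) z y / heatKernel ν T x y := by
  have hT : 0 < T := ht0.trans htT
  have hd : 0 < T - t := sub_pos.2 htT
  have hv : 0 < t * (T - t) / T := by positivity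
  have hpi := Real.pi_pos
  simp only [gaussianPDFReal, heatKernel, Finset.prod_mul_distrib, Finset.prod_const,
    Finset.card_univ, Fintype.card_fin, Real.coe_toNNReal _ hv.le]
  rw [← Real.exp_sum]
  have h1 : (√(2 * Real.pi * (t * (T - t) / T)))⁻¹ ^ ν =
      (2 * Real.pi * t) ^ (-(ν : ℝ) / 2) * (2 * Real.pi * (T - t)) ^ (-(ν : ℝ) / 2) /
        (2 * Real.pi * T) ^ (-(ν : ℝ) / 2) := by
    rw [← Real.mul_rpow (by positivity) (by positivity),
      ← Real.div_rpow (by positivity) (by positivity), Real.sqrt_eq_rpow,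
      ← Real.rpow_neg (by positivity), ← Real.rpow_natCast, ← Real.rpow_mul (by positivity)]
    congr 1
    · field_simp
    · ring
  have h2 : ∑ i, -(z i - ((t / T) • y + ((T - t) / T) • x) i) ^ 2 / (2 * (t * (T - t) / T)) =
      -(∑ i, (x i - z i) ^ 2) / (2 * t) + -(∑ i, (z i - y i) ^ 2) / (2 * (T - t)) -
        -(∑ i, (x i - y i) ^ 2) / (2 * T) := by
    simp only [← Finset.sum_neg_distrib, Finset.sum_div, ← Finset.sum_add_distrib,
      ← Finset.sum_sub_distrib]
    refine Finset.sum_congr rfl fun i _ => ?_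
    simp only [Pi.add_apply, Pi.smul_apply, smul_eq_mul]
    field_simp
    ring
  rw [h1, h2, Real.exp_sub, Real.exp_add]
  field_simp

lemma heatKernel_nonneg (ν : ℕ) {t : ℝ} (ht : 0 ≤ t) (x y : Fin ν → ℝ) :
    0 ≤ heatKernel ν t x y := by
  unfold heatKernel
  have := Real.pi_pos
  positivity

lemma heatKernel_meas1 (ν : ℕ) (t : ℝ) (x : Fin ν → ℝ) :
    Measurable (fun z => heatKernel ν t x z) := by
  unfold heatKernel; fun_prop

lemma heatKernel_meas2 (ν : ℕ) (t : ℝ) (x : Fin ν → ℝ) :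
    Measurable (fun z => heatKernel ν t z x) := by
  unfold heatKernel; fun_prop


/-- For `t ∈ (0,T)` and bounded Borel `f`,
`E[f(b_t)] = ∫ p_t(x,z) p_{T−t}(z,y) f(z) dz / p_T(x,y)`; in particular the law of `b_t` is
absolutely continuous w.r.t. Lebesgue measure with density
`z ↦ p_t(x,z) p_{T−t}(z,y)/p_T(x,y)`. -/
theorem statement11 {Ω : Type*} [m : MeasurableSpace Ω] (P : Measure Ω)
    [IsProbabilityMeasure P] (ν : ℕ) (hν : 0 < ν) (F : Filtration ℝ m)
    (B : ℝ → Ω → Fin ν → ℝ) (hB : IsBrownianMotion P ν F B) (T : ℝ) (hT : 0 < T)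
    (x y : Fin ν → ℝ) (t : ℝ) (ht : t ∈ Set.Ioo 0 T) :
    (∀ f : (Fin ν → ℝ) → ℝ, Measurable f → (∃ C, ∀ z, |f z| ≤ C) →
      ∫ ω, f (bridgeBB ν T x y (fun s => B s ω) t) ∂P =
        ∫ z : Fin ν → ℝ,
          heatKernel ν t x z * heatKernel ν (T - t) z y / heatKernel ν T x y * f z) ∧
    Measure.map (fun ω => bridgeBB ν T x y (fun s => B s ω) t) P =
      (volume : Measure (Fin ν → ℝ)).withDensity fun z =>
        ENNReal.ofReal (heatKernel ν t x z * heatKernel ν (T - t) z y / heatKernel ν T x y) := by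
  obtain ⟨hXm, hXl⟩ := law_X P ν F B hB T hT t ht
  obtain ⟨ht0, htT⟩ := ht
  have hv : 0 < t * (T - t) / T := div_pos (mul_pos ht0 (sub_pos.2 htT)) hT
  have hb : (fun ω => bridgeBB ν T x y (fun s => B s ω) t) =
      fun ω => ((t / T) • y + ((T - t) / T) • x) +
        (B t ω - (T - t) • ∫ s in (0 : ℝ)..t, ((T - s) ^ 2)⁻¹ • B s ω) := by
    funext ω
    rw [bridgeBB, if_pos htT, add_sub_assoc]
  have hbm : Measurable (fun ω => bridgeBB ν T x y (fun s => B s ω) t) := by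
    rw [hb]
    exact hXm.const_add _
  have hlaw : Measure.map (fun ω => bridgeBB ν T x y (fun s => B s ω) t) P =
      (volume : Measure (Fin ν → ℝ)).withDensity fun z =>
        ENNReal.ofReal
          (heatKernel ν t x z * heatKernel ν (T - t) z y / heatKernel ν T x y) := by
    simp only [← kernel_eq ν ht0 htT]
    rw [← pi_density ν hv, ← gam_add, ← hXl,
      Measure.map_map (measurable_const_add _) hXm, hb]
    rfl
  refine ⟨fun f hf _ => ?_, hlaw⟩
  rw [← integral_map (f := f) hbm.aemeasurable hf.aestronglyMeasurable, hlaw,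
    integral_withDensity_eq_integral_toReal_smul]
  · refine integral_congr_ae (ae_of_all _ fun z => ?_)
    simp only [smul_eq_mul]
    rw [ENNReal.toReal_ofReal]
    exact div_nonneg (mul_nonneg (heatKernel_nonneg ν ht0.le _ _)
      (heatKernel_nonneg ν (sub_pos.2 htT).le _ _)) (heatKernel_nonneg ν hT.le _ _)
  · exact (((heatKernel_meas1 ν t x).mul (heatKernel_meas2 ν (T - t) y)).div_const _).ennreal_ofReal
  · exact ae_of_all _ fun z => ENNReal.ofReal_lt_top
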